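/- Valid interval assignments lower-bound the optimum within factor 4: let the machine types satisfy c_k = 2^k, strictly increasing capacities B_k ∈ ℤ≥1, and non-increasing cost-per-job 2^k/B_k ≥ 2^{k+1}/B_{k+1} for all k. Let J be a finite instance of unit-length jobs and let 𝒜 = {(I, t_I, J_I)} be a valid interval assignment for J. Then every valid schedule S for J satisfies cost(S) ≥ (1/4)·Σ_{(I,t_I,J_I)∈𝒜} 2^{t_I}; in particular OPT(J) ≥ (1/4)·Σ_{(I,t_I,J_I)∈𝒜} 2^{t_I}. -/

import Mathlib

structure SchedInstance where
  jobs : Finset ℕ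
  r : ℕ → ℤ
  d : ℕ → ℤ
  window : ∀ j ∈ jobs, r j ≤ d j

structure Batch where
  btype : ℕ
  time : ℤ
  bjobs : Finset ℕ
deriving DecidableEq

def ValidSchedule (B : ℕ → ℕ) (P : SchedInstance) (S : Finset Batch) : Prop :=
  (∀ X ∈ S, X.bjobs.card ≤ B X.btype) ∧
  (∀ X ∈ S, ∀ j ∈ X.bjobs, j ∈ P.jobs ∧ P.r j ≤ X.time ∧ X.time ≤ P.d j) ∧
  (∀ X ∈ S, ∀ Y ∈ S, X ≠ Y → Disjoint X.bjobs Y.bjobs) ∧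
  (∀ j ∈ P.jobs, ∃ X ∈ S, j ∈ X.bjobs)

noncomputable def schedCost (c : ℕ → ℝ) (S : Finset Batch) : ℝ :=
  ∑ X ∈ S, c X.btype

noncomputable def OPT (c : ℕ → ℝ) (B : ℕ → ℕ) (P : SchedInstance) : ℝ :=
  sInf {x : ℝ | ∃ S : Finset Batch, ValidSchedule B P S ∧ schedCost c S = x}

/-- A tuple `(I, t_I, J_I)` of an interval assignment: a closed interval
`[lo, hi]` of the (integer) time horizon, a machine type, and a set of jobs. -/
structure IAItem where
  lo : ℤ
  hi : ℤ
  itype : ℕ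
  ijobs : Finset ℕ
deriving DecidableEq

/-- A valid interval assignment (Definition of the paper):
(1) `|J_I| = B (t_I - 1)` if `t_I ≥ 1`, and `|J_I| = 1` if `t_I = 0`;
(2) `[r_j, d_j] ⊆ I` for every `j ∈ J_I` (and `J_I ⊆ J`);
(3) distinct tuples of equal type have disjoint intervals;
(4) every job lies in at most one `J_I`. -/
def ValidAssignment (B : ℕ → ℕ) (P : SchedInstance) (A : Finset IAItem) : Prop :=
  (∀ e ∈ A, if e.itype = 0 then e.ijobs.card = 1 else e.ijobs.card = B (e.itype - 1)) ∧
  (∀ e ∈ A, ∀ j ∈ e.ijobs, j ∈ P.jobs ∧ e.lo ≤ P.r j ∧ P.d j ≤ e.hi) ∧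
  (∀ e ∈ A, ∀ e' ∈ A, e ≠ e' → e.itype = e'.itype →
      Set.Icc e.lo e.hi ∩ Set.Icc e'.lo e'.hi = ∅) ∧
  (∀ e ∈ A, ∀ e' ∈ A, e ≠ e' → Disjoint e.ijobs e'.ijobs)

open Finset

/-- The share of the weight `2 ^ e.itype` that the batch `X` pays for the item `e`: the full weight
if `X` has large enough type and runs a job of `e`, plus twice the cost per job of `X` for each job
of `e` that it runs. -/
noncomputable def batchCharge (B : ℕ → ℕ) (X : Batch) (e : IAItem) : ℝ :=
  (if e.itype ≤ X.btype ∧ (X.bjobs ∩ e.ijobs).Nonempty then (2 : ℝ) ^ e.itype else 0) +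
    2 * (((X.bjobs ∩ e.ijobs).card : ℝ) * ((2 : ℝ) ^ X.btype / (B X.btype : ℝ)))

theorem batchCharge_nonneg (B : ℕ → ℕ) (X : Batch) (e : IAItem) : 0 ≤ batchCharge B X e := by
  unfold batchCharge
  have : (0 : ℝ) ≤ if e.itype ≤ X.btype ∧ (X.bjobs ∩ e.ijobs).Nonempty
      then (2 : ℝ) ^ e.itype else 0 := by split_ifs <;> positivity
  positivity

theorem weight_le_sum_batchCharge {B : ℕ → ℕ} (hB1 : ∀ k, 1 ≤ B k)
    (hcpj : Antitone fun k => (2 : ℝ) ^ k / (B k : ℝ))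
    {P : SchedInstance} {A : Finset IAItem} (hA : ValidAssignment B P A)
    {S : Finset Batch} (hS : ValidSchedule B P S) {e : IAItem} (he : e ∈ A) :
    (2 : ℝ) ^ e.itype ≤ ∑ X ∈ S, batchCharge B X e := by
  obtain ⟨hcard, hwin, -, -⟩ := hA
  obtain ⟨-, -, -, hcov⟩ := hS
  by_cases h : ∃ X ∈ S, e.itype ≤ X.btype ∧ (X.bjobs ∩ e.ijobs).Nonempty
  · obtain ⟨X, hX, hXe⟩ := h
    refine le_trans ?_ (single_le_sum (fun Y _ => batchCharge_nonneg B Y e) hX)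
    rw [batchCharge, if_pos hXe]
    have : (0 : ℝ) ≤
        2 * (((X.bjobs ∩ e.ijobs).card : ℝ) * ((2 : ℝ) ^ X.btype / (B X.btype : ℝ))) := by
      positivity
    linarith
  · push Not at h
    have hc := hcard e he
    have ht : e.itype ≠ 0 := by
      intro h0
      rw [if_pos h0] at hc
      obtain ⟨j, hj⟩ := card_pos.mp (by omega : 0 < e.ijobs.card)
      obtain ⟨X, hX, hjX⟩ := hcov j (hwin e he j hj).1
      have hemp := h X hX (by omega)
      exact notMem_empty j (hemp ▸ mem_inter.mpr ⟨hjX, hj⟩)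
    rw [if_neg ht] at hc
    obtain ⟨s, hs⟩ := Nat.exists_eq_succ_of_ne_zero ht
    have hc' : e.ijobs.card = B s := by rw [hc, hs]; rfl
    have hBs : (0 : ℝ) < B s := by exact_mod_cast hB1 s
    have hsub : e.ijobs ⊆ S.biUnion fun X => X.bjobs ∩ e.ijobs := by
      intro j hj
      obtain ⟨X, hX, hjX⟩ := hcov j (hwin e he j hj).1
      exact mem_biUnion.mpr ⟨X, hX, mem_inter.mpr ⟨hjX, hj⟩⟩
    have hsum : (B s : ℝ) ≤ ∑ X ∈ S, ((X.bjobs ∩ e.ijobs).card : ℝ) := by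
      rw [← hc']
      exact_mod_cast (card_le_card hsub).trans card_biUnion_le
    calc (2 : ℝ) ^ e.itype = (B s : ℝ) * (2 * ((2 : ℝ) ^ s / (B s : ℝ))) := by
          rw [hs, pow_succ]; field_simp
      _ ≤ (∑ X ∈ S, ((X.bjobs ∩ e.ijobs).card : ℝ)) * (2 * ((2 : ℝ) ^ s / (B s : ℝ))) := by
          gcongr
      _ ≤ ∑ X ∈ S, batchCharge B X e := by
          rw [sum_mul]
          refine sum_le_sum fun X hX => ?_
          rcases (X.bjobs ∩ e.ijobs).eq_empty_or_nonempty with hemp | hne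
          · simpa [hemp] using batchCharge_nonneg B X e
          · have hlt : X.btype ≤ s := by
              by_contra hlt
              exact hne.ne_empty (h X hX (by omega))
            have hle : (2 : ℝ) ^ s / (B s : ℝ) ≤ 2 ^ X.btype / (B X.btype : ℝ) := hcpj hlt
            rw [batchCharge, if_neg (fun hh => hne.ne_empty (h X hX hh.1)), zero_add,
              mul_left_comm]
            gcongr

theorem sum_batchCharge_le {B : ℕ → ℕ} (hB1 : ∀ k, 1 ≤ B k)
    {P : SchedInstance} {A : Finset IAItem} (hA : ValidAssignment B P A)
    {S : Finset Batch} (hS : ValidSchedule B P S) {X : Batch} (hX : X ∈ S) :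
    ∑ e ∈ A, batchCharge B X e ≤ 4 * (2 : ℝ) ^ X.btype := by
  obtain ⟨-, hwin, hdisjI, hdisjJ⟩ := hA
  obtain ⟨hcap, htime, -, -⟩ := hS
  have hBpos : (0 : ℝ) < B X.btype := by exact_mod_cast hB1 X.btype
  have hfull : ∑ e ∈ A, (if e.itype ≤ X.btype ∧ (X.bjobs ∩ e.ijobs).Nonempty
      then (2 : ℝ) ^ e.itype else 0) ≤ 2 * (2 : ℝ) ^ X.btype := by
    rw [← sum_filter]
    have hmem : ∀ e ∈ A, (X.bjobs ∩ e.ijobs).Nonempty → X.time ∈ Set.Icc e.lo e.hi := by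
      rintro e he ⟨j, hj⟩
      rw [mem_inter] at hj
      obtain ⟨-, hr, hd⟩ := htime X hX j hj.1
      obtain ⟨-, hlo, hhi⟩ := hwin e he j hj.2
      exact ⟨hlo.trans hr, hd.trans hhi⟩
    have hinj : Set.InjOn IAItem.itype
        (A.filter fun e => e.itype ≤ X.btype ∧ (X.bjobs ∩ e.ijobs).Nonempty) := by
      intro e he e' he' heq
      simp only [coe_filter, Set.mem_ofPred_eq] at he he'
      by_contra hne
      have hI := hdisjI e he.1 e' he'.1 hne heq
      exact Set.notMem_empty X.time
        (hI ▸ ⟨hmem e he.1 he.2.2, hmem e' he'.1 he'.2.2⟩)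
    rw [← sum_image (f := fun t => (2 : ℝ) ^ t) hinj]
    calc _ ≤ ∑ t ∈ range (X.btype + 1), (2 : ℝ) ^ t := by
          refine sum_le_sum_of_subset_of_nonneg ?_ fun _ _ _ => by positivity
          intro t ht
          obtain ⟨e, he, rfl⟩ := mem_image.mp ht
          exact mem_range.mpr (Nat.lt_succ_of_le (mem_filter.mp he).2.1)
      _ ≤ 2 * (2 : ℝ) ^ X.btype := by
          rw [geom_sum_eq (by norm_num), pow_succ]
          linarith
  have hshare : (∑ e ∈ A, ((X.bjobs ∩ e.ijobs).card : ℝ)) ≤ (B X.btype : ℝ) := by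
    have hdisj : (A : Set IAItem).PairwiseDisjoint fun e => X.bjobs ∩ e.ijobs :=
      fun e he e' he' hne =>
        (hdisjJ e he e' he' hne).mono inter_subset_right inter_subset_right
    have hle : ∑ e ∈ A, (X.bjobs ∩ e.ijobs).card ≤ B X.btype := by
      rw [← card_biUnion hdisj]
      exact (card_le_card (biUnion_subset.mpr fun e _ => inter_subset_left)).trans (hcap X hX)
    exact_mod_cast hle
  have hjobs : (∑ e ∈ A, ((X.bjobs ∩ e.ijobs).card : ℝ)) * ((2 : ℝ) ^ X.btype / (B X.btype : ℝ))
      ≤ (2 : ℝ) ^ X.btype := by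
    calc _ ≤ (B X.btype : ℝ) * ((2 : ℝ) ^ X.btype / (B X.btype : ℝ)) := by gcongr
      _ = (2 : ℝ) ^ X.btype := by field_simp
  simp only [batchCharge]
  rw [sum_add_distrib, ← mul_sum, ← sum_mul]
  linarith

/-- Running every job alone at its release time on a machine of type `0` is a valid schedule. -/
theorem exists_validSchedule {B : ℕ → ℕ} (hB1 : ∀ k, 1 ≤ B k) (P : SchedInstance) :
    ∃ S : Finset Batch, ValidSchedule B P S := by
  refine ⟨P.jobs.image fun j => ⟨0, P.r j, {j}⟩, ?_, ?_, ?_, ?_⟩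
  · simp [hB1]
  · simpa using fun j hj => ⟨hj, P.window j hj⟩
  · simp only [forall_mem_image]
    intro i _ j _ hne
    refine disjoint_singleton.mpr ?_
    rintro rfl
    exact hne rfl
  · intro j hj
    exact ⟨_, mem_image_of_mem _ hj, mem_singleton_self j⟩

/-- with costs `2^k`, strictly increasing capacities and non-increasing
cost-per-job, every valid schedule costs at least `(1/4) ∑_{(I,t_I,J_I) ∈ 𝒜} 2^{t_I}`
for any valid interval assignment `𝒜`; in particular so does `OPT`. -/
theorem interval_assignment_lower_bound
    (B : ℕ → ℕ) (hB1 : ∀ k, 1 ≤ B k) (hBmono : StrictMono B)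
    (hcpj : ∀ k, (2 : ℝ) ^ (k + 1) / (B (k + 1) : ℝ) ≤ (2 : ℝ) ^ k / (B k : ℝ))
    (P : SchedInstance) (A : Finset IAItem) (hA : ValidAssignment B P A) :
    (∀ S : Finset Batch, ValidSchedule B P S →
        (1 / 4 : ℝ) * ∑ e ∈ A, (2 : ℝ) ^ e.itype ≤ schedCost (fun k => (2 : ℝ) ^ k) S) ∧
      (1 / 4 : ℝ) * ∑ e ∈ A, (2 : ℝ) ^ e.itype ≤ OPT (fun k => (2 : ℝ) ^ k) B P := by
  have hanti : Antitone fun k => (2 : ℝ) ^ k / (B k : ℝ) := antitone_nat_of_succ_le hcpj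
  have key : ∀ S : Finset Batch, ValidSchedule B P S →
      (1 / 4 : ℝ) * ∑ e ∈ A, (2 : ℝ) ^ e.itype ≤ schedCost (fun k => (2 : ℝ) ^ k) S := by
    intro S hS
    have h : ∑ e ∈ A, (2 : ℝ) ^ e.itype ≤ 4 * schedCost (fun k => (2 : ℝ) ^ k) S := by
      calc ∑ e ∈ A, (2 : ℝ) ^ e.itype
          ≤ ∑ e ∈ A, ∑ X ∈ S, batchCharge B X e :=
            sum_le_sum fun e he => weight_le_sum_batchCharge hB1 hanti hA hS he
        _ = ∑ X ∈ S, ∑ e ∈ A, batchCharge B X e := sum_comm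
        _ ≤ ∑ X ∈ S, 4 * (2 : ℝ) ^ X.btype :=
            sum_le_sum fun X hX => sum_batchCharge_le hB1 hA hS hX
        _ = 4 * schedCost (fun k => (2 : ℝ) ^ k) S := by rw [schedCost, mul_sum]
    linarith
  refine ⟨key, le_csInf ?_ ?_⟩
  · obtain ⟨S, hS⟩ := exists_validSchedule hB1 P
    exact ⟨_, S, hS, rfl⟩
  · rintro x ⟨S, hS, rfl⟩
    exact key S hS
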